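/- Let n ≥ 3 and let N be a natural number with the Ramsey property N → (n, n)³, i.e., for every function from the 3-element subsets of a set of N elements to Bool there is an n-element subset all of whose 3-element subsets receive the same value. Then every family of N pairwise distinct, pairwise noncrossing nonempty compact convex subsets of ℝ² in general position, with no two members tangent and no line tangent to three members, contains a subfamily of n sets in convex position. -/

import Mathlib

open Set

noncomputable section

/-- The Euclidean plane. -/
abbrev Plane : Type := EuclideanSpace ℝ (Fin 2)

/-- The 2×2 determinant of two plane vectors. -/
def det2 (u v : Plane) : ℝ := u 0 * v 1 - u 1 * v 0

/-- A convex body in the plane: nonempty, compact and convex. -/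
def ConvexBody2 (A : Set Plane) : Prop := A.Nonempty ∧ IsCompact A ∧ Convex ℝ A

/-- A family of sets is in convex position if removing any member changes the
convex hull of the union of the family. -/
def ConvexPos (F : Set (Set Plane)) : Prop :=
  ∀ A ∈ F, convexHull ℝ (⋃₀ F) ≠ convexHull ℝ (⋃₀ (F \ {A}))

/-- A family is in general position if every 3-element subfamily is in convex position. -/
def GenPos (F : Set (Set Plane)) : Prop :=
  ∀ G ⊆ F, G.ncard = 3 → ConvexPos G

/-- Two sets are noncrossing if both set differences are connected. -/
def NoncrossingPair (A B : Set Plane) : Prop := IsConnected (A \ B) ∧ IsConnected (B \ A)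

/-- Two convex bodies are tangent if they intersect but their interiors are disjoint. -/
def TangentBodies (A B : Set Plane) : Prop :=
  (A ∩ B).Nonempty ∧ interior A ∩ interior B = ∅

/-- The line `{x | f x = c}` (for `f ≠ 0`) is tangent to `A`:
it meets `A` and `A` lies in one of the two closed half-planes it bounds. -/
def TangentLineTo (f : Plane →ₗ[ℝ] ℝ) (c : ℝ) (A : Set Plane) : Prop :=
  (∃ x ∈ A, f x = c) ∧ ((∀ x ∈ A, f x ≤ c) ∨ (∀ x ∈ A, c ≤ f x))

/-- No line is tangent to three distinct members of the family. -/
def NoTripleTangentLine (F : Set (Set Plane)) : Prop :=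
  ∀ f : Plane →ₗ[ℝ] ℝ, f ≠ 0 → ∀ c : ℝ, ∀ A ∈ F, ∀ B ∈ F, ∀ C ∈ F,
    A ≠ B → B ≠ C → A ≠ C →
    ¬ (TangentLineTo f c A ∧ TangentLineTo f c B ∧ TangentLineTo f c C)

/-- The ordered triple `(A₁, A₂, A₃)` is counterclockwise oriented. -/
def CCWOriented (A₁ A₂ A₃ : Set Plane) : Prop :=
  ∃ a₁ ∈ A₁ ∩ frontier (convexHull ℝ (A₁ ∪ A₂ ∪ A₃)),
  ∃ a₂ ∈ A₂ ∩ frontier (convexHull ℝ (A₁ ∪ A₂ ∪ A₃)),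
  ∃ a₃ ∈ A₃ ∩ frontier (convexHull ℝ (A₁ ∪ A₂ ∪ A₃)),
    0 < det2 (a₂ - a₁) (a₃ - a₁)

/-- The ordered triple `(A₁, A₂, A₃)` is clockwise oriented. -/
def CWOriented (A₁ A₂ A₃ : Set Plane) : Prop :=
  ∃ a₁ ∈ A₁ ∩ frontier (convexHull ℝ (A₁ ∪ A₂ ∪ A₃)),
  ∃ a₂ ∈ A₂ ∩ frontier (convexHull ℝ (A₁ ∪ A₂ ∪ A₃)),
  ∃ a₃ ∈ A₃ ∩ frontier (convexHull ℝ (A₁ ∪ A₂ ∪ A₃)),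
    det2 (a₂ - a₁) (a₃ - a₁) < 0

/-- An affine line in the plane: an affine subspace with 1-dimensional direction. -/
def IsLine (L : AffineSubspace ℝ Plane) : Prop := Module.finrank ℝ L.direction = 1

/-- `L` is a transversal line of the family `F`. -/
def TransversalLine (L : AffineSubspace ℝ Plane) (F : Set (Set Plane)) : Prop :=
  IsLine L ∧ ∀ A ∈ F, ((L : Set Plane) ∩ A).Nonempty

/-!
Rotate a direction around the circle and record the support functions of the bodies. A finite family
is in convex position iff each member has a direction in which its support function strictly exceeds
all the others. For noncrossing `A` and `B` the directions in which `A` exceeds `B` form an arc: the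
points of `A \ B` seen from `B` in two complementary arcs of directions would disconnect it.

Three bodies in convex position have an orientation, namely the cyclic order of their peaks, so
Ramsey's theorem gives `n` bodies whose triples all have the same one. A circular version of the
planar fact that points whose triples are all oriented alike are in convex position finishes the
proof: process the bodies other than `i` in their cyclic order starting from `i`, and keep a
direction in which `i` exceeds all those processed so far.
-/

section SupportFunction

open scoped Real

/-- The inner product with `(cos t, sin t)` as a linear functional, i.e. the height in the direction
of angle `t`. -/
def dirForm (t : ℝ) : Plane →L[ℝ] ℝ :=
  Real.cos t • EuclideanSpace.proj 0 + Real.sin t • EuclideanSpace.proj 1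

/-- The support function of `A`, parametrised by the angle of the direction. It is meant for
nonempty bounded `A`; otherwise `sSup` takes its junk value. -/
def supportFn (t : ℝ) (A : Set Plane) : ℝ := sSup (dirForm t '' A)

variable {A B : Set Plane} {x : Plane} {r s t : ℝ}

theorem dirForm_apply (t : ℝ) (x : Plane) :
    dirForm t x = Real.cos t * x 0 + Real.sin t * x 1 := rfl

theorem dirForm_antiperiodic : Function.Antiperiodic dirForm π := fun t => by
  simp only [dirForm, Real.cos_add_pi, Real.sin_add_pi]
  module

theorem dirForm_periodic : Function.Periodic dirForm (2 * π) :=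
  dirForm_antiperiodic.periodic_two_mul

theorem supportFn_periodic : Function.Periodic supportFn (2 * π) := fun t => by
  funext A
  rw [supportFn, supportFn, dirForm_periodic]

theorem sin_sub_mul_dirForm (r s t : ℝ) (x : Plane) :
    Real.sin (t - r) * dirForm s x
      = Real.sin (t - s) * dirForm r x + Real.sin (s - r) * dirForm t x := by
  simp only [dirForm_apply, Real.sin_sub]
  ring

theorem exists_eq_smul_dirForm (f : Plane →L[ℝ] ℝ) : ∃ c : ℝ, 0 ≤ c ∧ ∃ t, f = c • dirForm t := by
  let z : ℂ := ⟨f (EuclideanSpace.single 0 1), f (EuclideanSpace.single 1 1)⟩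
  refine ⟨‖z‖, norm_nonneg z, z.arg, ?_⟩
  ext x
  have hx : x = x 0 • EuclideanSpace.single 0 (1 : ℝ) + x 1 • EuclideanSpace.single 1 (1 : ℝ) := by
    ext i
    fin_cases i <;> simp
  calc f x = z.re * x 0 + z.im * x 1 := by
        conv_lhs => rw [hx, map_add, map_smul, map_smul]
        simp only [z, smul_eq_mul, mul_comm]
    _ = ‖z‖ * dirForm z.arg x := by
        rw [dirForm_apply, ← Complex.norm_mul_cos_arg z, ← Complex.norm_mul_sin_arg z]
        ring

theorem exists_dirForm_lt_of_notMem (hc : IsClosed B) (hB : Convex ℝ B) (hx : x ∉ B) :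
    ∃ t, ∀ y ∈ B, dirForm t y < dirForm t x := by
  obtain ⟨f, u, hfB, hfx⟩ := geometric_hahn_banach_closed_point hB hc hx
  obtain ⟨c, hc₀, t, rfl⟩ := exists_eq_smul_dirForm f
  exact ⟨t, fun y hy => lt_of_mul_lt_mul_left ((hfB y hy).trans hfx) hc₀⟩

theorem dirForm_le_supportFn (hA : IsCompact A) (t : ℝ) (hx : x ∈ A) :
    dirForm t x ≤ supportFn t A :=
  le_csSup (hA.image (dirForm t).continuous).bddAbove (mem_image_of_mem _ hx)

theorem exists_dirForm_eq_supportFn (hA : IsCompact A) (hne : A.Nonempty) (t : ℝ) :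
    ∃ x ∈ A, dirForm t x = supportFn t A := by
  obtain ⟨x, hx, h⟩ := hA.exists_sSup_image_eq hne (dirForm t).continuous.continuousOn
  exact ⟨x, hx, h.symm⟩

theorem exists_supportFn_lt_dirForm (hB : ConvexBody2 B) (hx : x ∉ B) :
    ∃ t, supportFn t B < dirForm t x := by
  obtain ⟨t, ht⟩ := exists_dirForm_lt_of_notMem hB.2.1.isClosed hB.2.2 hx
  obtain ⟨b, hb, hbt⟩ := exists_dirForm_eq_supportFn hB.2.1 hB.1 t
  exact ⟨t, hbt ▸ ht b hb⟩

theorem exists_supportFn_lt_supportFn (hA : IsCompact A) (hB : ConvexBody2 B)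
    (h : (A \ B).Nonempty) : ∃ t, supportFn t B < supportFn t A := by
  obtain ⟨x, hxA, hxB⟩ := h
  obtain ⟨t, ht⟩ := exists_supportFn_lt_dirForm hB hxB
  exact ⟨t, ht.trans_le (dirForm_le_supportFn hA t hxA)⟩

end SupportFunction

section ConvexPosition

theorem isCompact_convexJoin {E : Type*} [AddCommGroup E] [Module ℝ E] [TopologicalSpace E]
    [ContinuousAdd E] [ContinuousSMul ℝ E] {s t : Set E} (hs : IsCompact s) (ht : IsCompact t) :
    IsCompact (convexJoin ℝ s t) := by
  have himage : convexJoin ℝ s t =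
      (fun p : E × E × ℝ => (1 - p.2.2) • p.1 + p.2.2 • p.2.1) '' (s ×ˢ t ×ˢ Icc 0 1) := by
    ext x
    simp only [mem_convexJoin, segment_eq_image, mem_image, mem_prod, Prod.exists]
    grind
  rw [himage]
  exact (hs.prod (ht.prod isCompact_Icc)).image (by fun_prop)

theorem isCompact_convexHull_sUnion {E : Type*} [AddCommGroup E] [Module ℝ E] [TopologicalSpace E]
    [ContinuousAdd E] [ContinuousSMul ℝ E] {F : Set (Set E)} (hF : F.Finite)
    (hc : ∀ A ∈ F, IsCompact A) (hconv : ∀ A ∈ F, Convex ℝ A) :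
    IsCompact (convexHull ℝ (⋃₀ F)) := by
  induction F, hF using Set.Finite.induction_on with
  | empty => simp
  | @insert A F _ _ ih =>
    rw [forall_mem_insert] at hc hconv
    have hcompact := ih hc.2 hconv.2
    rw [sUnion_insert]
    rcases A.eq_empty_or_nonempty with rfl | hA
    · rwa [empty_union]
    rcases (⋃₀ F).eq_empty_or_nonempty with hF | hF
    · rw [hF, union_empty, hconv.1.convexHull_eq]
      exact hc.1
    rw [convexHull_union hA hF, hconv.1.convexHull_eq]
    exact isCompact_convexJoin hc.1 hcompact

theorem convexPos_iff_forall_exists_supportFn_lt {F : Set (Set Plane)} (hfin : F.Finite)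
    (hF : ∀ A ∈ F, ConvexBody2 A) :
    ConvexPos F ↔ ∀ A ∈ F, ∃ t, ∀ B ∈ F, B ≠ A → supportFn t B < supportFn t A := by
  refine forall₂_congr fun A hA => ⟨fun hne => ?_, fun ⟨t, ht⟩ heq => ?_⟩
  · obtain ⟨x, hxA, hx⟩ : ∃ x ∈ A, x ∉ convexHull ℝ (⋃₀ (F \ {A})) := by
      by_contra! hsub
      refine hne ((convexHull_min (sUnion_subset fun B hB => ?_) (convex_convexHull ℝ _)).antisymm
        (convexHull_mono (sUnion_subset_sUnion sdiff_subset)))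
      rcases eq_or_ne B A with rfl | hBA
      · exact hsub
      · exact (subset_sUnion_of_mem (mem_sdiff_of_mem hB hBA)).trans (subset_convexHull ℝ _)
    have hcompact : IsCompact (convexHull ℝ (⋃₀ (F \ {A}))) :=
      isCompact_convexHull_sUnion hfin.sdiff (fun B hB => (hF B hB.1).2.1)
        fun B hB => (hF B hB.1).2.2
    obtain ⟨t, ht⟩ := exists_dirForm_lt_of_notMem hcompact.isClosed (convex_convexHull ℝ _) hx
    refine ⟨t, fun B hB hBA => ?_⟩
    obtain ⟨b, hb, hbt⟩ := exists_dirForm_eq_supportFn (hF B hB).2.1 (hF B hB).1 t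
    calc supportFn t B = dirForm t b := hbt.symm
      _ < dirForm t x := ht b (subset_convexHull ℝ _ ⟨B, ⟨hB, hBA⟩, hb⟩)
      _ ≤ supportFn t A := dirForm_le_supportFn (hF A hA).2.1 t hxA
  · obtain ⟨x, hxA, hxt⟩ := exists_dirForm_eq_supportFn (hF A hA).2.1 (hF A hA).1 t
    have hbelow : convexHull ℝ (⋃₀ (F \ {A})) ⊆ {y | dirForm t y < supportFn t A} :=
      convexHull_min
        (sUnion_subset fun B hB y hy =>
          (dirForm_le_supportFn (hF B hB.1).2.1 t hy).trans_lt (ht B hB.1 hB.2))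
        (convex_halfSpace_lt (dirForm t).toLinearMap.isLinear _)
    exact (hbelow (heq ▸ subset_convexHull ℝ _ ⟨A, hA, hxA⟩)).ne hxt

end ConvexPosition

section Arc

open scoped Real

/-- A `T`-periodic set of reals is an arc of the circle `ℝ / T` (possibly empty or full) if
membership does not alternate along any four cyclically ordered points. -/
def IsArc (T : ℝ) (U : Set ℝ) : Prop :=
  ∀ ⦃r s t u : ℝ⦄, r < s → s < t → t < u → u < r + T → r ∈ U → t ∈ U → s ∈ U ∨ u ∈ U

/-- The points lying strictly above `B` in some direction whose angle is in `I`. -/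
def pointsAbove (B : Set Plane) (I : Set ℝ) : Set Plane :=
  {x | ∃ t ∈ I, supportFn t B < dirForm t x}

variable {A B : Set Plane} {x : Plane} {r s t : ℝ}

theorem isOpen_pointsAbove (B : Set Plane) (I : Set ℝ) : IsOpen (pointsAbove B I) := by
  have hunion : pointsAbove B I = ⋃ t ∈ I, {x | supportFn t B < dirForm t x} := by
    ext x
    simp [pointsAbove]
  rw [hunion]
  exact isOpen_biUnion fun t _ => isOpen_lt continuous_const (dirForm t).continuous

theorem supportFn_lt_dirForm_of_lt_of_lt (hB : IsCompact B) (hne : B.Nonempty) (hrs : r < s)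
    (hst : s < t) (htr : t - r < π) (hr : supportFn r B < dirForm r x)
    (ht : supportFn t B < dirForm t x) : supportFn s B < dirForm s x := by
  obtain ⟨b, hb, hbs⟩ := exists_dirForm_eq_supportFn hB hne s
  have hsin_ts : 0 < Real.sin (t - s) := Real.sin_pos_of_pos_of_lt_pi (by linarith) (by linarith)
  have hsin_sr : 0 < Real.sin (s - r) := Real.sin_pos_of_pos_of_lt_pi (by linarith) (by linarith)
  have hsin_tr : 0 < Real.sin (t - r) := Real.sin_pos_of_pos_of_lt_pi (by linarith) (by linarith)
  rw [← hbs]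
  refine lt_of_mul_lt_mul_left ?_ hsin_tr.le
  rw [sin_sub_mul_dirForm r s t b, sin_sub_mul_dirForm r s t x]
  have hbr := (dirForm_le_supportFn hB r hb).trans_lt hr
  have hbt := (dirForm_le_supportFn hB t hb).trans_lt ht
  exact add_lt_add (mul_lt_mul_of_pos_left hbr hsin_ts) (mul_lt_mul_of_pos_left hbt hsin_sr)

theorem compl_subset_pointsAbove_Ioc (hB : ConvexBody2 B) (r : ℝ) :
    Bᶜ ⊆ pointsAbove B (Ioc r (r + 2 * π)) := fun x hx => by
  have hper : Function.Periodic (fun t => supportFn t B < dirForm t x) (2 * π) := fun t => by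
    simp only [supportFn_periodic t, dirForm_periodic t]
  obtain ⟨t₀, ht₀⟩ := exists_supportFn_lt_dirForm hB hx
  obtain ⟨t, ht, heq⟩ := hper.exists_mem_Ioc Real.two_pi_pos t₀ r
  exact ⟨t, ht, heq.mp ht₀⟩

theorem supportFn_lt_dirForm_of_mem_pointsAbove (hB : IsCompact B) (hne : B.Nonempty)
    (hx : x ∈ pointsAbove B (Ioo r s)) (hx' : x ∈ pointsAbove B (Ioo s (r + 2 * π))) :
    supportFn r B < dirForm r x ∨ supportFn s B < dirForm s x := by
  obtain ⟨u, ⟨hru, hus⟩, hu⟩ := hx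
  obtain ⟨v, ⟨hsv, hvr⟩, hv⟩ := hx'
  rcases lt_trichotomy (v - u) π with h | h | h
  · exact .inr (supportFn_lt_dirForm_of_lt_of_lt hB hne hus hsv h hu hv)
  · obtain ⟨b, hb⟩ := hne
    have hbu := (dirForm_le_supportFn hB u hb).trans_lt hu
    have hbv := (dirForm_le_supportFn hB v hb).trans_lt hv
    have hanti : dirForm v = -dirForm u := by
      rw [← dirForm_antiperiodic u, ← h, add_sub_cancel]
    rw [hanti] at hbv
    exact absurd hbv (neg_lt_neg hbu).not_gt
  · left
    rw [← supportFn_periodic u, ← dirForm_periodic u] at hu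
    rw [← supportFn_periodic r, ← dirForm_periodic r]
    exact supportFn_lt_dirForm_of_lt_of_lt hB hne hvr (by linarith) (by linarith) hv hu

theorem isArc_setOf_supportFn_lt (hA : IsCompact A) (hne : A.Nonempty) (hB : ConvexBody2 B)
    (hAB : IsPreconnected (A \ B)) : IsArc (2 * π) {t | supportFn t B < supportFn t A} := by
  intro r s t u hrs hst htu hur hr ht
  by_contra! hsu
  have hle {w : ℝ} (hw : w ∉ {t | supportFn t B < supportFn t A}) {x : Plane} (hx : x ∈ A) :
      ¬ supportFn w B < dirForm w x :=
    ((dirForm_le_supportFn hA w hx).trans (not_lt.1 hw)).not_gt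
  have hmeets {w : ℝ} (hw : supportFn w B < supportFn w A) {I : Set ℝ} (hI : w ∈ I) :
      (A \ B ∩ pointsAbove B I).Nonempty := by
    obtain ⟨a, ha, haw⟩ := exists_dirForm_eq_supportFn hA hne w
    rw [← haw] at hw
    exact ⟨a, ⟨ha, fun haB => (dirForm_le_supportFn hB.2.1 w haB).not_gt hw⟩, w, hI, hw⟩
  have hcover : A \ B ⊆ pointsAbove B (Ioo s u) ∪ pointsAbove B (Ioo u (s + 2 * π)) := by
    rintro x ⟨hxA, hxB⟩
    obtain ⟨w, ⟨hsw, hws⟩, hw⟩ := compl_subset_pointsAbove_Ioc hB s hxB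
    rcases lt_trichotomy w u with hwu | rfl | huw
    · exact .inl ⟨w, ⟨hsw, hwu⟩, hw⟩
    · exact absurd hw (hle hsu.2 hxA)
    · refine .inr ⟨w, ⟨huw, hws.lt_of_ne ?_⟩, hw⟩
      rintro rfl
      rw [supportFn_periodic, dirForm_periodic] at hw
      exact hle hsu.1 hxA hw
  have hr' : supportFn (r + 2 * π) B < supportFn (r + 2 * π) A := by
    rwa [supportFn_periodic]
  obtain ⟨x, ⟨hxA, -⟩, hx, hx'⟩ := hAB _ _ (isOpen_pointsAbove _ _) (isOpen_pointsAbove _ _) hcover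
    (hmeets ht ⟨hst, htu⟩) (hmeets hr' ⟨hur, by linarith⟩)
  exact (supportFn_lt_dirForm_of_mem_pointsAbove hB.2.1 hB.1 hx hx').elim (hle hsu.1 hxA)
    (hle hsu.2 hxA)

end Arc

section Orientation

variable {ι β γ : Type*} [LinearOrder β] [LinearOrder γ] {H : ℝ → ι → β} {T : ℝ} {i j k : ι}

/-- In the profile `h`, the value at `i` strictly exceeds those at `j` and `k`. -/
def Peak (h : ι → β) (i j k : ι) : Prop := h j < h i ∧ h k < h i

/-- The triple `(i, j, k)` is counterclockwise with respect to the `T`-periodic family of profiles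
`H`: within one period, each of the three exceeds the other two at some time, in this cyclic order.
For support functions this is the orientation of a triple of bodies. -/
def Ccw (H : ℝ → ι → β) (T : ℝ) (i j k : ι) : Prop :=
  ∃ x y z, x < y ∧ y < z ∧ z < x + T ∧ Peak (H x) i j k ∧ Peak (H y) j k i ∧ Peak (H z) k i j

theorem Peak.swap {h : ι → β} (hp : Peak h i j k) : Peak h i k j := ⟨hp.2, hp.1⟩

theorem Peak.not_peak {h : ι → β} (hp : Peak h i j k) : ¬ Peak h j k i :=
  fun hq => hp.1.asymm hq.2

theorem Ccw.rotate (hH : Function.Periodic H T) (h : Ccw H T i j k) : Ccw H T j k i := by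
  obtain ⟨x, y, z, hxy, hyz, hzx, hx, hy, hz⟩ := h
  exact ⟨y, z, x + T, hyz, hzx, by linarith, hy, hz, (hH x).symm ▸ hx⟩

theorem ccw_or_ccw_swap (hT : 0 < T) (hH : Function.Periodic H T) {x y z : ℝ}
    (hx : Peak (H x) i j k) (hy : Peak (H y) j k i) (hz : Peak (H z) k i j) :
    Ccw H T i j k ∨ Ccw H T i k j := by
  obtain ⟨y', ⟨hxy, hyx⟩, hyy⟩ := hH.exists_mem_Ioc hT y x
  obtain ⟨z', ⟨hxz, hzx⟩, hzz⟩ := hH.exists_mem_Ioc hT z x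
  rw [hyy] at hy
  rw [hzz] at hz
  have hyx' : y' < x + T := hyx.lt_of_ne fun h => hx.not_peak (hH x ▸ h ▸ hy)
  have hzx' : z' < x + T := hzx.lt_of_ne fun h => hx.swap.not_peak (hH x ▸ h ▸ hz.swap)
  rcases lt_trichotomy y' z' with h | rfl | h
  · exact .inl ⟨x, y', z', hxy, h, hzx', hx, hy, hz⟩
  · exact absurd hz hy.not_peak
  · exact .inr ⟨x, z', y', hxz, h, hyx', hx.swap, hz.swap, hy.swap⟩

theorem Ccw.exists_peak_mem_Ioc (hT : 0 < T) (hH : Function.Periodic H T) (h : Ccw H T i j k)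
    (p : ℝ) : ∃ x ∈ Ioc p (p + T), ∃ y z, x - T < y ∧ y < z ∧ z < x ∧
      Peak (H x) i j k ∧ Peak (H y) j k i ∧ Peak (H z) k i j := by
  obtain ⟨x, y, z, hxy, hyz, hzx, hx, hy, hz⟩ := h
  obtain ⟨n, hn, -⟩ := existsUnique_add_zsmul_mem_Ioc hT x p
  have hshift (t : ℝ) : H (t + n • T - T) = H t := by rw [hH.sub_eq, hH.zsmul n]
  refine ⟨x + n • T, hn, y + n • T - T, z + n • T - T, by linarith, by linarith, by linarith, ?_⟩
  rw [hH.zsmul n, hshift, hshift]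
  exact ⟨hx, hy, hz⟩

theorem Ccw.exists_peak_of_isArc (hT : 0 < T) (hH : Function.Periodic H T)
    (harc : ∀ a b, IsArc T {t | H t b < H t a}) {a b : ι} (h : Ccw H T i b a) {p : ℝ}
    (hb : H p b < H p i) (ha : H p i ≤ H p a) :
    ∃ q, p < q ∧ Peak (H q) i b a ∧ ∀ s ∈ Ioo p q, H s a < H s i → H s b < H s i := by
  obtain ⟨q, ⟨hpq, hqp⟩, y, z, hqy, hyz, hzq, hq, hy, hz⟩ := h.exists_peak_mem_Ioc hT hH p
  have hqp' : q < p + T := hqp.lt_of_ne fun h => ha.not_gt (hH p ▸ h ▸ hq.2)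
  have hq' : Peak (H (q - T)) i b a := (hH.sub_eq q).symm ▸ hq
  refine ⟨q, hpq, hq, fun s ⟨hps, hsq⟩ hsa => ?_⟩
  by_contra! hsb
  have hpy : p < y := by
    by_contra! hyp
    rcases hyp.lt_or_eq with hyp | rfl
    · rcases harc i b hqy hyp hps (by linarith) hq'.1 hb with hib | hib
      · exact hy.2.asymm hib
      · exact hsb.not_gt hib
    · exact hy.2.asymm hb
  have hzs : z < s := by
    by_contra! hsz
    rcases hsz.lt_or_eq with hsz | rfl
    · rcases harc i a (by linarith) hps hsz (by linarith) hq'.2 hsa with hia | hia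
      · exact ha.not_gt hia
      · exact hz.1.asymm hia
    · exact hz.1.asymm hsa
  rcases harc a b hpy hyz hzs (by linarith) (hb.trans_le ha) hz.2 with hab | hab
  · exact hy.1.asymm hab
  · exact (hab.trans hsa).not_ge hsb

theorem exists_forall_lt_of_ccw (hT : 0 < T) (hH : Function.Periodic H T)
    (harc : ∀ a b, IsArc T {t | H t b < H t a}) (f : ι → γ) (s : Finset ι)
    (hne : ∀ a ∈ s, ∃ t, H t a < H t i)
    (hccw : ∀ b ∈ s, ∀ a ∈ s, b ≠ a → f b ≤ f a → Ccw H T i b a) :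
    ∃ t, ∀ b ∈ s, H t b < H t i := by
  classical
  induction s using Finset.induction_on_max_value f with
  | empty => exact ⟨0, by simp⟩
  | insert a s has hmax ih =>
    obtain ⟨p, hp⟩ := ih (fun b hb => hne b (Finset.mem_insert_of_mem hb)) fun b hb c hc =>
      hccw b (Finset.mem_insert_of_mem hb) c (Finset.mem_insert_of_mem hc)
    rcases lt_or_ge (H p a) (H p i) with hpa | hpa
    · exact ⟨p, Finset.forall_mem_insert .. |>.2 ⟨hpa, hp⟩⟩
    rcases s.eq_empty_or_nonempty with rfl | hs
    · obtain ⟨t, ht⟩ := hne a (Finset.mem_insert_self ..)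
      exact ⟨t, by simpa using ht⟩
    have hpeak : ∀ b ∈ s, ∃ q, p < q ∧ Peak (H q) i b a ∧
        ∀ t ∈ Ioo p q, H t a < H t i → H t b < H t i := fun b hb =>
      (hccw b (Finset.mem_insert_of_mem hb) a (Finset.mem_insert_self ..)
        (ne_of_mem_of_not_mem hb has) (hmax b hb)).exists_peak_of_isArc hT hH harc (hp b hb) hpa
    choose! q hpq hq hprop using hpeak
    -- At the earliest of the times `q b`, the `i`-th value exceeds all the others.
    obtain ⟨c, hc, hmin⟩ := s.exists_min_image q hs
    refine ⟨q c, Finset.forall_mem_insert .. |>.2 ⟨(hq c hc).2, fun b hb => ?_⟩⟩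
    rcases (hmin b hb).lt_or_eq with hlt | heq
    · exact hprop b hb _ ⟨hpq c hc, hlt⟩ (hq c hc).2
    · exact heq ▸ (hq b hb).1

theorem exists_forall_lt_of_forall_ccw (hT : 0 < T) (hH : Function.Periodic H T)
    (harc : ∀ a b, IsArc T {t | H t b < H t a}) {f : ι → γ} {S : Finset ι} (hf : InjOn f S)
    (hne : ∀ a ∈ S, ∀ b ∈ S, a ≠ b → ∃ t, H t b < H t a)
    (hccw : ∀ x ∈ S, ∀ y ∈ S, ∀ z ∈ S, f x < f y → f y < f z → Ccw H T x y z) (hi : i ∈ S) :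
    ∃ t, ∀ j ∈ S, j ≠ i → H t j < H t i := by
  classical
  -- This key lists `S \ {i}` in the cyclic order of `f`, starting after `i`.
  let key : ι → Prop ×ₗ γ := fun j => toLex (f j < f i, f j)
  have hkey : ∀ b ∈ S.erase i, ∀ a ∈ S.erase i, b ≠ a → key b ≤ key a → Ccw H T i b a := by
    intro b hb a ha hba hle
    obtain ⟨hbi, hb⟩ := Finset.mem_erase.1 hb
    have ha := Finset.mem_of_mem_erase ha
    have hfba := hf.ne hb ha hba
    have hfbi := hf.ne hb hi hbi
    have hcyclic : f i < f b ∧ f b < f a ∨ f b < f a ∧ f a < f i ∨ f a < f i ∧ f i < f b := by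
      simp only [key, Prod.Lex.toLex_le_toLex, lt_iff_le_not_ge, le_Prop_eq, eq_iff_iff] at hle
      grind
    rcases hcyclic with ⟨hib, hba⟩ | ⟨hba, hai⟩ | ⟨hai, hib⟩
    · exact hccw i hi b hb a ha hib hba
    · exact ((hccw b hb a ha i hi hba hai).rotate hH).rotate hH
    · exact (hccw a ha i hi b hb hai hib).rotate hH
  obtain ⟨t, ht⟩ := exists_forall_lt_of_ccw hT hH harc key (S.erase i)
    (fun a ha => hne i hi a (Finset.mem_of_mem_erase ha) (Finset.ne_of_mem_erase ha).symm) hkey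
  exact ⟨t, fun j hj hji => ht j (Finset.mem_erase.2 ⟨hji, hj⟩)⟩

end Orientation

section Ramsey

variable {ι : Type*} {n : ℕ}

/-- The Ramsey property `ι → (n, n)³`: every two-colouring of the triples of `ι` has a homogeneous
set of size `n`. Colourings are defined on all finite sets, and only their values on triples
matter. -/
def RamseyTriples (ι : Type*) (n : ℕ) : Prop :=
  ∀ χ : Finset ι → Bool, ∃ S : Finset ι, S.card = n ∧ ∃ b : Bool, ∀ T ⊆ S, T.card = 3 → χ T = b

theorem RamseyTriples.exists_homogeneous [LinearOrder ι] (h : RamseyTriples ι n)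
    (P : ι → ι → ι → Prop) :
    ∃ S : Finset ι, S.card = n ∧
      ((∀ x ∈ S, ∀ y ∈ S, ∀ z ∈ S, x < y → y < z → P x y z) ∨
        ∀ x ∈ S, ∀ y ∈ S, ∀ z ∈ S, x < y → y < z → ¬ P x y z) := by
  classical
  let Q (T : Finset ι) : Prop := ∃ x y z, x < y ∧ y < z ∧ T = {x, y, z} ∧ P x y z
  have hQ {x y z : ι} (hxy : x < y) (hyz : y < z) : Q {x, y, z} ↔ P x y z := by
    refine ⟨fun ⟨x', y', z', hxy', hyz', heq, hP⟩ => ?_, fun hP => ⟨x, y, z, hxy, hyz, rfl, hP⟩⟩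
    obtain ⟨rfl, rfl, rfl⟩ : x = x' ∧ y = y' ∧ z = z' := by
      have hx : x ∈ ({x', y', z'} : Finset ι) := by simp [← heq]
      have hy : y ∈ ({x', y', z'} : Finset ι) := by simp [← heq]
      have hz : z ∈ ({x', y', z'} : Finset ι) := by simp [← heq]
      simp only [Finset.mem_insert, Finset.mem_singleton] at hx hy hz
      clear heq
      grind
    exact hP
  obtain ⟨S, hS, b, hb⟩ := h fun T => decide (Q T)
  have hcolor : ∀ x ∈ S, ∀ y ∈ S, ∀ z ∈ S, x < y → y < z → decide (P x y z) = b := by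
    intro x hx y hy z hz hxy hyz
    rw [← hb {x, y, z} (by grind) (Finset.card_eq_three.2
      ⟨x, y, z, hxy.ne, (hxy.trans hyz).ne, hyz.ne, rfl⟩), decide_eq_decide, hQ hxy hyz]
  refine ⟨S, hS, ?_⟩
  cases b
  · exact .inr (by simpa using hcolor)
  · exact .inl (by simpa using hcolor)

end Ramsey

section Family

open scoped Real

variable {ι : Type*} {A : ι → Set Plane} {i j k : ι} {n : ℕ}

/-- The heights, in the direction of angle `t`, of the members of an indexed family. -/
def supportProfile (A : ι → Set Plane) (t : ℝ) (i : ι) : ℝ := supportFn t (A i)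

theorem supportProfile_periodic (A : ι → Set Plane) :
    Function.Periodic (supportProfile A) (2 * π) :=
  supportFn_periodic.comp fun h i => h (A i)

theorem isArc_setOf_supportProfile_lt (hbody : ∀ i, ConvexBody2 (A i))
    (hnc : ∀ i j, i ≠ j → NoncrossingPair (A i) (A j)) (i j : ι) :
    IsArc (2 * π) {t | supportProfile A t j < supportProfile A t i} := by
  refine isArc_setOf_supportFn_lt (hbody i).2.1 (hbody i).1 (hbody j) ?_
  rcases eq_or_ne i j with rfl | hij
  · simpa using isPreconnected_empty
  · exact (hnc i j hij).1.isPreconnected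

theorem convexPos_image_iff (hinj : Function.Injective A) (hbody : ∀ i, ConvexBody2 (A i))
    {S : Set ι} (hS : S.Finite) : ConvexPos (A '' S) ↔
      ∀ i ∈ S, ∃ t, ∀ j ∈ S, j ≠ i → supportProfile A t j < supportProfile A t i := by
  rw [convexPos_iff_forall_exists_supportFn_lt (hS.image A) (by simp [hbody])]
  simp only [forall_mem_image, hinj.ne_iff, supportProfile]

theorem exists_peak_of_genPos (hinj : Function.Injective A) (hbody : ∀ i, ConvexBody2 (A i))
    (hgen : GenPos (range A)) (hij : i ≠ j) (hik : i ≠ k) (hjk : j ≠ k) :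
    ∃ t, Peak (supportProfile A t) i j k := by
  have hcard : (A '' {i, j, k}).ncard = 3 := by
    rw [ncard_image_of_injective _ hinj]
    exact ncard_eq_three.2 ⟨i, j, k, hij, hik, hjk, rfl⟩
  have hpos := hgen _ (image_subset_range A {i, j, k}) hcard
  obtain ⟨t, ht⟩ := (convexPos_image_iff hinj hbody (by simp)).1 hpos i (by simp)
  exact ⟨t, ht j (by simp) hij.symm, ht k (by simp) hik.symm⟩

theorem ccw_or_ccw_swap_of_genPos (hinj : Function.Injective A) (hbody : ∀ i, ConvexBody2 (A i))
    (hgen : GenPos (range A)) (hij : i ≠ j) (hik : i ≠ k) (hjk : j ≠ k) :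
    Ccw (supportProfile A) (2 * π) i j k ∨ Ccw (supportProfile A) (2 * π) i k j := by
  obtain ⟨x, hx⟩ := exists_peak_of_genPos hinj hbody hgen hij hik hjk
  obtain ⟨y, hy⟩ := exists_peak_of_genPos hinj hbody hgen hjk hij.symm hik.symm
  obtain ⟨z, hz⟩ := exists_peak_of_genPos hinj hbody hgen hik.symm hjk.symm hij
  exact ccw_or_ccw_swap Real.two_pi_pos (supportProfile_periodic A) hx hy hz

theorem convexPos_image_of_forall_ccw {γ : Type*} [LinearOrder γ] (hinj : Function.Injective A)
    (hbody : ∀ i, ConvexBody2 (A i)) (hnc : ∀ i j, i ≠ j → NoncrossingPair (A i) (A j))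
    {f : ι → γ} {S : Finset ι} (hf : InjOn f S)
    (hccw : ∀ x ∈ S, ∀ y ∈ S, ∀ z ∈ S, f x < f y → f y < f z →
      Ccw (supportProfile A) (2 * π) x y z) : ConvexPos (A '' S) :=
  (convexPos_image_iff hinj hbody S.finite_toSet).2 fun _ hi =>
    exists_forall_lt_of_forall_ccw Real.two_pi_pos (supportProfile_periodic A)
      (isArc_setOf_supportProfile_lt hbody hnc) hf
      (fun a _ b _ hab =>
        exists_supportFn_lt_supportFn (hbody a).2.1 (hbody b) (hnc a b hab).1.nonempty)
      hccw hi

theorem injective_of_noncrossingPair (hnc : ∀ i j, i ≠ j → NoncrossingPair (A i) (A j)) :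
    Function.Injective A := fun i j hij => by
  by_contra hne
  obtain ⟨x, hxi, hxj⟩ := (hnc i j hne).1.nonempty
  exact hxj (hij ▸ hxi)

theorem convex_position_of_ramsey_general (hram : RamseyTriples ι n)
    (hbody : ∀ i, ConvexBody2 (A i)) (hnc : ∀ i j, i ≠ j → NoncrossingPair (A i) (A j))
    (hgen : GenPos (range A)) : ∃ G ⊆ range A, G.ncard = n ∧ ConvexPos G := by
  obtain ⟨_, -⟩ := exists_wellFoundedLT ι
  have hinj := injective_of_noncrossingPair hnc
  obtain ⟨S, hS, hmono⟩ := hram.exists_homogeneous (Ccw (supportProfile A) (2 * π))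
  refine ⟨A '' S, image_subset_range A S, ?_, ?_⟩
  · rw [ncard_image_of_injective _ hinj, ncard_coe_finset, hS]
  rcases hmono with hccw | hcw
  · exact convexPos_image_of_forall_ccw hinj hbody hnc (f := id) (injOn_id _) hccw
  · -- If no increasing triple is counterclockwise, then every decreasing triple is.
    have hccw : ∀ x ∈ S, ∀ y ∈ S, ∀ z ∈ S, y < x → z < y →
        Ccw (supportProfile A) (2 * π) x y z := fun x hx y hy z hz hyx hzy =>
      ((ccw_or_ccw_swap_of_genPos hinj hbody hgen hzy.ne (hzy.trans hyx).ne hyx.ne).resolve_left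
        (hcw z hz y hy x hx hzy hyx)).rotate (supportProfile_periodic A)
    exact convexPos_image_of_forall_ccw hinj hbody hnc OrderDual.toDual.injective.injOn hccw

end Family

/-- If `N` has the Ramsey property `N → (n, n)³`, then any `N` noncrossing convex
bodies in general position (no two tangent, no common tangent line to three)
contain `n` in convex position. -/
theorem convex_position_of_ramsey (n N : ℕ) (hn : 3 ≤ n)
    (hram : ∀ χ : Finset (Fin N) → Bool, ∃ S : Finset (Fin N), S.card = n ∧
      ∃ b : Bool, ∀ T ⊆ S, T.card = 3 → χ T = b)
    (A : Fin N → Set Plane)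
    (hinj : Function.Injective A)
    (hbody : ∀ i, ConvexBody2 (A i))
    (hnc : ∀ i j, i ≠ j → NoncrossingPair (A i) (A j))
    (hgen : GenPos (Set.range A))
    (htan : ∀ i j, i ≠ j → ¬ TangentBodies (A i) (A j))
    (hline : NoTripleTangentLine (Set.range A)) :
    ∃ G ⊆ Set.range A, G.ncard = n ∧ ConvexPos G :=
  convex_position_of_ramsey_general hram hbody hnc hgen
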